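/- Let X be a finite-dimensional normed space admitting a (1, D, τ₁, τ₂, +∞)-threshold map into a Hilbert space, with D > 1, 0 < τ₁ < τ₂, and τ₂ > 8τ₁. Then there exists a map h from X to a Hilbert space such that for all x₁, x₂ ∈ X: (√τ₂ − √(8τ₁)) · min(1, ‖x₁-x₂‖/(2D+4)) ≤ ‖h(x₁) − h(x₂)‖ ≤ √(2τ₁‖x₁-x₂‖). In particular h is a uniform embedding of X into a Hilbert space with moduli depending only on τ₁, τ₂, D. -/

import Mathlib

/-!
Chaining unit steps along a segment bounds `dist (f x) (f y)` by `2 * τ₁ * dist x y` as soon as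
`1 ≤ dist x y`. By Schoenberg, the square root of a Hilbert distance is again a Hilbert distance
(integrate the positive semidefinite kernels `(t + ‖x - y‖ ^ 2)⁻¹` over `t`), so there is a map `g`
with `dist (g x) (g y) ^ 2 = dist (f x) (f y)`, which is `1/2`-Hölder on `1`-separated sets. A
`1/2`-Hölder map into a Hilbert space extends to one more point with the same constant: at a saddle
point of `∑ i, l i * (dist z (y i) ^ 2 - d i)` the value is at most `0`, by testing `z` against the
centre of mass of the weights `l` (Wells–Williams). Extending from a `1`-net of each finite set
costs `2 * √(2 * τ₁) = √(8 * τ₁)` in the lower bound.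

The kernels `dist (g x) (g y) ^ 2` of maps into Hilbert spaces that satisfy the resulting bounds
form a compact convex set, preserved by the commuting translations of `X`; it is nonempty because
the finite pieces have a limit, and a Markov–Kakutani fixed point comes from a map with
translation-invariant distances. For such a map, `n` equal steps reach the scale `D + 2` at which
the lower bound is known, so each step already accounts for a fraction `1 / n` of that bound.
-/

open Filter Matrix MeasureTheory Metric Set Topology
open scoped NNReal

universe u w

section PosSemidef

variable {ι : Type u}

/-- Unlike in `Matrix.posSemidef_gram`, the index type may be infinite. -/
theorem gram_posSemidef {E : Type*} [SeminormedAddCommGroup E] [InnerProductSpace ℝ E]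
    (v : ι → E) : (gram ℝ v).PosSemidef := by
  refine ⟨isHermitian_gram ℝ v, fun c ↦ ?_⟩
  calc 0 ≤ inner ℝ (c.sum fun i a ↦ a • v i) (c.sum fun i a ↦ a • v i) := real_inner_self_nonneg
    _ = _ := by
      simp only [Finsupp.sum_inner, Finsupp.inner_sum, real_inner_smul_left, real_inner_smul_right,
        gram_apply, star_trivial]
      refine Finsupp.sum_congr fun i _ ↦ Finsupp.sum_congr fun j _ ↦ ?_
      rw [real_inner_comm, mul_assoc, mul_comm (c j)]

theorem exists_gram_eq_of_posSemidef [Small.{w} ι] {k : Matrix ι ι ℝ} (hk : k.PosSemidef) :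
    ∃ (H : Type w) (_ : NormedAddCommGroup H) (_ : InnerProductSpace ℝ H)
      (_ : CompleteSpace H) (v : ι → H), gram ℝ v = k := by
  have hsymm (i j : ι) : k j i = k i j := hk.isHermitian.apply i j
  let e := equivShrink.{w} ι
  let K : Matrix (Shrink.{w} ι) (Shrink.{w} ι) (ℝ →L[ℝ] ℝ) :=
    .of fun i j ↦ k (e.symm i) (e.symm j) • 1
  have hK : Fact K.PosSemidef := by
    have posSemidef_iff := (RKHS.posSemidef_tfae (𝕜 := ℝ) (K := K)).out 0 2
    refine ⟨posSemidef_iff.2 ⟨?_, fun c ↦ ?_⟩⟩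
    · ext i j
      simp [K, hsymm (e.symm i) (e.symm j)]
    · refine ((hk.submatrix e.symm).2 c).trans_eq ?_
      simp [K, hsymm, mul_comm, mul_left_comm]
  refine ⟨RKHS.OfKernel K, inferInstance, inferInstance, inferInstance,
    fun i ↦ RKHS.kerFun (RKHS.OfKernel K) (e i) 1, ?_⟩
  ext i j
  rw [gram_apply, ← RKHS.kernel_inner, RKHS.OfKernel.kernel_ofKernel]
  simp [K, hsymm]

theorem isClosed_setOf_posSemidef : IsClosed {k : Matrix ι ι ℝ | k.PosSemidef} := by
  simp only [PosSemidef, IsHermitian, ofPred_and, ofPred_forall]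
  refine .inter (isClosed_eq (by fun_prop) (by fun_prop)) (isClosed_iInter fun c ↦ ?_)
  simp only [Finsupp.sum]
  exact isClosed_le (by fun_prop) (by fun_prop)

theorem posSemidef_integral {α : Type*} [MeasurableSpace α] {μ : Measure α}
    {k : α → Matrix ι ι ℝ} (hk : ∀ᵐ a ∂μ, (k a).PosSemidef)
    (hint : ∀ i j, Integrable (fun a ↦ k a i j) μ) :
    (Matrix.of fun i j ↦ ∫ a, k a i j ∂μ).PosSemidef := by
  refine ⟨?_, fun c ↦ ?_⟩
  · ext i j
    exact integral_congr_ae (hk.mono fun a ha ↦ ha.isHermitian.apply i j)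
  · calc 0 ≤ ∫ a, c.sum fun i x ↦ c.sum fun j y ↦ star x * k a i j * y ∂μ :=
          integral_nonneg_of_ae (hk.mono fun a ha ↦ ha.2 c)
      _ = _ := by
        simp only [Finsupp.sum, of_apply]
        rw [integral_finsetSum _ fun i _ ↦ integrable_finsetSum _ fun j _ ↦
          ((hint i j).const_mul _).mul_const _]
        refine Finset.sum_congr rfl fun i _ ↦ ?_
        rw [integral_finsetSum _ fun j _ ↦ ((hint i j).const_mul _).mul_const _]
        simp only [integral_mul_const, integral_const_mul]

theorem posSemidef_map_pow {k : Matrix ι ι ℝ} (hk : k.PosSemidef) (n : ℕ) :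
    (k.map (· ^ n)).PosSemidef := by
  induction n with
  | zero => simpa [gram, Matrix.map] using gram_posSemidef fun _ : ι ↦ (1 : ℝ)
  | succ n ih => simpa only [hadamard, Matrix.map, pow_succ, of_apply] using ih.hadamard hk

theorem posSemidef_map_exp {k : Matrix ι ι ℝ} (hk : k.PosSemidef) :
    (k.map Real.exp).PosSemidef := by
  have hlim : Tendsto (fun n ↦ ∑ m ∈ Finset.range n, (m.factorial : ℝ)⁻¹ • k.map (· ^ m)) atTop
      (𝓝 (k.map Real.exp)) := by
    refine tendsto_pi_nhds.2 fun i ↦ tendsto_pi_nhds.2 fun j ↦ ?_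
    simpa [Matrix.sum_apply, Real.exp_eq_exp_ℝ, div_eq_inv_mul] using
      (NormedSpace.expSeries_div_hasSum_exp (k i j)).tendsto_sum_nat
  refine isClosed_setOf_posSemidef.mem_of_tendsto hlim (.of_forall fun n ↦ ?_)
  exact posSemidef_sum _ fun m _ ↦ (posSemidef_map_pow hk m).smul (by positivity)

theorem posSemidef_exp_neg_mul_dist_sq {E : Type*} [SeminormedAddCommGroup E]
    [InnerProductSpace ℝ E] {s : ℝ} (hs : 0 ≤ s) (f : ι → E) :
    (Matrix.of fun i j ↦ Real.exp (-(s * dist (f i) (f j) ^ 2))).PosSemidef := by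
  have heq : (Matrix.of fun i j ↦ Real.exp (-(s * dist (f i) (f j) ^ 2))) =
      gram ℝ (fun i ↦ Real.exp (-(s * ‖f i‖ ^ 2))) ⊙ ((2 * s) • gram ℝ f).map Real.exp := by
    ext i j
    simp only [of_apply, hadamard_apply, gram_apply, map_apply, Matrix.smul_apply, smul_eq_mul,
      RCLike.inner_apply, conj_trivial, dist_eq_norm, norm_sub_sq_real, ← Real.exp_add]
    ring_nf
  rw [heq]
  exact (gram_posSemidef _).hadamard (posSemidef_map_exp ((gram_posSemidef f).smul (by positivity)))

end PosSemidef

section NegType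

variable {Y : Type u}

/-- The Gromov product of `x` and `y` at the base point `o`, computed from a kernel `K` that plays
the role of a squared distance; for `K x y = ‖x - y‖ ^ 2` it is the inner product of `x - o` and
`y - o`. -/
noncomputable def gromovMatrix (K : Y → Y → ℝ) (o : Y) : Matrix Y Y ℝ :=
  .of fun x y ↦ (K x o + K y o - K x y) / 2

/-- Kernels of negative type in the sense of Schoenberg, i.e. squared distances of maps into
Hilbert space. Conditional negative definiteness, `∑ i j, c i * c j * K (x i) (x j) ≤ 0` whenever
`∑ i, c i = 0`, is encoded as positive semidefiniteness of the Gromov products. -/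
structure IsNegType (K : Y → Y → ℝ) : Prop where
  self (x : Y) : K x x = 0
  symm (x y : Y) : K x y = K y x
  posSemidef (o : Y) : (gromovMatrix K o).PosSemidef

namespace IsNegType

theorem dist_sq {E : Type*} [SeminormedAddCommGroup E] [InnerProductSpace ℝ E] (g : Y → E) :
    IsNegType fun x y ↦ dist (g x) (g y) ^ 2 where
  self x := by simp
  symm x y := by rw [dist_comm]
  posSemidef o := by
    have heq : gromovMatrix (fun x y ↦ dist (g x) (g y) ^ 2) o = gram ℝ fun x ↦ g x - g o := by
      ext x y
      rw [gram_apply, real_inner_eq_norm_mul_self_add_norm_mul_self_sub_norm_sub_mul_self_div_two]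
      simp [gromovMatrix, dist_eq_norm, sq]
    exact heq ▸ gram_posSemidef _

theorem exists_dist_sq_eq [Small.{w} Y] {K : Y → Y → ℝ} (hK : IsNegType K) :
    ∃ (H : Type w) (_ : NormedAddCommGroup H) (_ : InnerProductSpace ℝ H)
      (_ : CompleteSpace H) (g : Y → H), ∀ x y, dist (g x) (g y) ^ 2 = K x y := by
  rcases isEmpty_or_nonempty Y with _ | ⟨⟨o⟩⟩
  · exact ⟨PUnit, inferInstance, inferInstance, inferInstance, isEmptyElim, isEmptyElim⟩
  obtain ⟨H, _, _, _, g, hg⟩ := exists_gram_eq_of_posSemidef.{u, w} (hK.posSemidef o)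
  refine ⟨H, inferInstance, inferInstance, inferInstance, g, fun x y ↦ ?_⟩
  have inner_eq (x y : Y) : inner ℝ (g x) (g y) = (K x o + K y o - K x y) / 2 :=
    congr_fun₂ hg x y
  rw [dist_eq_norm, norm_sub_sq_real, ← real_inner_self_eq_norm_sq, ← real_inner_self_eq_norm_sq,
    inner_eq, inner_eq, inner_eq, hK.self, hK.self]
  ring

theorem nonneg {K : Y → Y → ℝ} (hK : IsNegType K) (x y : Y) : 0 ≤ K x y := by
  simpa [gromovMatrix, hK.self] using (hK.posSemidef y).diag_nonneg (i := x)

theorem comp {Z : Type*} {K : Y → Y → ℝ} (hK : IsNegType K) (f : Z → Y) :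
    IsNegType fun x y ↦ K (f x) (f y) where
  self x := hK.self (f x)
  symm x y := hK.symm (f x) (f y)
  posSemidef o := (hK.posSemidef (f o)).submatrix f

theorem add {K L : Y → Y → ℝ} (hK : IsNegType K) (hL : IsNegType L) : IsNegType (K + L) where
  self x := by simp [hK.self, hL.self]
  symm x y := by simp [hK.symm x y, hL.symm x y]
  posSemidef o := by
    have heq : gromovMatrix (K + L) o = gromovMatrix K o + gromovMatrix L o := by
      ext x y
      simp only [gromovMatrix, of_apply, Matrix.add_apply, Pi.add_apply]
      ring
    exact heq ▸ (hK.posSemidef o).add (hL.posSemidef o)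

theorem smul {K : Y → Y → ℝ} (hK : IsNegType K) {c : ℝ} (hc : 0 ≤ c) : IsNegType (c • K) where
  self x := by simp [hK.self]
  symm x y := by simp [hK.symm x y]
  posSemidef o := by
    have heq : gromovMatrix (c • K) o = c • gromovMatrix K o := by
      ext x y
      simp only [gromovMatrix, of_apply, Matrix.smul_apply, Pi.smul_apply, smul_eq_mul]
      ring
    exact heq ▸ (hK.posSemidef o).smul hc

protected theorem integral {α : Type*} [MeasurableSpace α] {μ : Measure α} {K : α → Y → Y → ℝ}
    (hK : ∀ᵐ a ∂μ, IsNegType (K a)) (hint : ∀ x y, Integrable (fun a ↦ K a x y) μ) :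
    IsNegType fun x y ↦ ∫ a, K a x y ∂μ where
  self x := integral_eq_zero_of_ae (hK.mono fun a ha ↦ ha.self x)
  symm x y := integral_congr_ae (hK.mono fun a ha ↦ ha.symm x y)
  posSemidef o := by
    have heq : gromovMatrix (fun x y ↦ ∫ a, K a x y ∂μ) o =
        .of fun x y ↦ ∫ a, gromovMatrix (K a) o x y ∂μ := by
      ext x y
      simp only [gromovMatrix, of_apply]
      rw [integral_div, integral_sub (f := fun a ↦ K a x o + K a y o) ((hint x o).add (hint y o))
        (hint x y), integral_add (hint x o) (hint y o)]
    exact heq ▸ posSemidef_integral (hK.mono fun a ha ↦ ha.posSemidef o) fun x y ↦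
      (((hint x o).add (hint y o)).sub (hint x y)).div_const 2

theorem isClosed_setOf : IsClosed {K : Y → Y → ℝ | IsNegType K} := by
  have heq : {K : Y → Y → ℝ | IsNegType K} = {K | (∀ x, K x x = 0) ∧ (∀ x y, K x y = K y x) ∧
      ∀ o, (gromovMatrix K o).PosSemidef} :=
    Set.ext fun K ↦ ⟨fun h ↦ ⟨h.self, h.symm, h.posSemidef⟩, fun h ↦ ⟨h.1, h.2.1, h.2.2⟩⟩
  simp only [heq, ofPred_and, ofPred_forall]
  refine .inter (isClosed_iInter fun x ↦ isClosed_eq (by fun_prop) (by fun_prop)) <|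
    .inter (isClosed_iInter fun x ↦ isClosed_iInter fun y ↦
      isClosed_eq (by fun_prop) (by fun_prop)) <|
    isClosed_iInter fun o ↦ isClosed_setOf_posSemidef.preimage ?_
  unfold gromovMatrix
  fun_prop

theorem convex_setOf : Convex ℝ {K : Y → Y → ℝ | IsNegType K} :=
  fun _ hK _ hL _ _ ha hb _ ↦ (hK.smul ha).add (hL.smul hb)

theorem one_sub_of_posSemidef {k : Matrix Y Y ℝ} (hk : k.PosSemidef) (hdiag : ∀ x, k x x = 1) :
    IsNegType fun x y ↦ 1 - k x y := by
  obtain ⟨H, _, _, _, v, rfl⟩ := exists_gram_eq_of_posSemidef.{u, u} hk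
  have heq : (fun x y ↦ 1 - gram ℝ v x y) =
      (2⁻¹ : ℝ) • fun x y ↦ dist (v x) (v y) ^ 2 := by
    ext x y
    simp only [gram_apply, real_inner_self_eq_norm_sq] at hdiag
    simp only [gram_apply, Pi.smul_apply, smul_eq_mul, dist_eq_norm, norm_sub_sq_real, hdiag]
    ring
  exact heq ▸ (IsNegType.dist_sq v).smul (by norm_num)

theorem posSemidef_exp_neg_mul {K : Y → Y → ℝ} (hK : IsNegType K) {s : ℝ} (hs : 0 ≤ s) :
    (Matrix.of fun x y ↦ Real.exp (-(s * K x y))).PosSemidef := by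
  obtain ⟨H, _, _, _, g, hg⟩ := exists_dist_sq_eq.{u, u} hK
  simpa only [hg] using posSemidef_exp_neg_mul_dist_sq hs g

theorem posSemidef_inv_add {K : Y → Y → ℝ} (hK : IsNegType K) {t : ℝ} (ht : 0 < t) :
    (Matrix.of fun x y ↦ (t + K x y)⁻¹).PosSemidef := by
  have hneg (x y : Y) : -(t + K x y) < 0 := by linarith [hK.nonneg x y]
  have heq : (Matrix.of fun x y ↦ (t + K x y)⁻¹) =
      .of fun x y ↦ ∫ s in Ioi (0 : ℝ), Real.exp (-(t + K x y) * s) := by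
    ext x y
    rw [of_apply, of_apply, integral_exp_mul_Ioi (hneg x y)]
    simp [-neg_add_rev]
  rw [heq]
  refine posSemidef_integral (k := fun s ↦ .of fun x y ↦ Real.exp (-(t + K x y) * s))
    ((ae_restrict_iff' measurableSet_Ioi).2 (.of_forall fun s hs ↦ ?_))
    fun x y ↦ integrableOn_exp_mul_Ioi (hneg x y) 0
  have hexp : (Matrix.of fun x y ↦ Real.exp (-(t + K x y) * s)) =
      Real.exp (-(t * s)) • .of fun x y ↦ Real.exp (-(s * K x y)) := by
    ext x y
    simp only [of_apply, Matrix.smul_apply, smul_eq_mul, ← Real.exp_add]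
    ring_nf
  exact hexp ▸ (hK.posSemidef_exp_neg_mul (mem_Ioi.1 hs).le).smul (Real.exp_nonneg _)

theorem rpowIntegrand {K : Y → Y → ℝ} (hK : IsNegType K) {p t : ℝ} (ht : 0 < t) :
    IsNegType fun x y ↦ Real.rpowIntegrand₀₁ p t (K x y) := by
  have heq : (fun x y ↦ Real.rpowIntegrand₀₁ p t (K x y)) =
      (t ^ p * t⁻¹) • fun x y ↦ 1 - (t • Matrix.of fun x y ↦ (t + K x y)⁻¹) x y := by
    ext x y
    simp only [Real.rpowIntegrand₀₁, Pi.smul_apply, Matrix.smul_apply, of_apply, smul_eq_mul]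
    field_simp
  refine heq ▸ (one_sub_of_posSemidef ((hK.posSemidef_inv_add ht).smul ht.le) fun x ↦ ?_).smul
    (by positivity)
  simp [hK.self, ht.ne']

theorem rpow {K : Y → Y → ℝ} (hK : IsNegType K) {p : ℝ} (hp : p ∈ Ioo 0 1) :
    IsNegType fun x y ↦ K x y ^ p := by
  simp only [Real.rpow_eq_const_mul_integral hp (hK.nonneg _ _)]
  refine (IsNegType.integral ((ae_restrict_iff' measurableSet_Ioi).2 (.of_forall fun t ht ↦ ?_))
    fun x y ↦ Real.integrableOn_rpowIntegrand₀₁_Ioi hp (hK.nonneg x y)).smul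
    (inv_nonneg.2 (Real.integral_rpowIntegrand₀₁_one_pos hp).le)
  exact hK.rpowIntegrand ht

protected theorem dist {E : Type*} [SeminormedAddCommGroup E] [InnerProductSpace ℝ E] (f : Y → E) :
    IsNegType fun x y ↦ dist (f x) (f y) := by
  simpa only [← Real.sqrt_eq_rpow, Real.sqrt_sq dist_nonneg] using
    (dist_sq f).rpow (p := 1 / 2) (by norm_num)

end IsNegType

theorem exists_dist_sq_eq_dist [Small.{w} Y] {E : Type*} [SeminormedAddCommGroup E]
    [InnerProductSpace ℝ E] (f : Y → E) :
    ∃ (H : Type w) (_ : NormedAddCommGroup H) (_ : InnerProductSpace ℝ H)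
      (_ : CompleteSpace H) (g : Y → H), ∀ x y, dist (g x) (g y) ^ 2 = dist (f x) (f y) :=
  (IsNegType.dist f).exists_dist_sq_eq

end NegType

section WellsWilliams

theorem sum_mul_dist_sq_centerMass {ι E : Type*} [Fintype ι] [SeminormedAddCommGroup E]
    [InnerProductSpace ℝ E] (y : ι → E) {l : ι → ℝ} (hl : ∑ i, l i = 1) :
    ∑ i, l i * dist (∑ j, l j • y j) (y i) ^ 2 =
      (∑ i, ∑ j, l i * l j * dist (y i) (y j) ^ 2) / 2 := by
  set z := ∑ j, l j • y j
  have hcenter : ∑ j, l j • (z - y j) = 0 := by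
    simp_rw [smul_sub, Finset.sum_sub_distrib, ← Finset.sum_smul, hl, one_smul, z, sub_self]
  have hinner (i : ι) : ∑ j, l j * inner ℝ (z - y i) (z - y j) = 0 := by
    simp_rw [← real_inner_smul_right, ← inner_sum, hcenter, inner_zero_right]
  have hrow (i : ι) : ∑ j, l j * dist (y i) (y j) ^ 2 =
      dist z (y i) ^ 2 + ∑ j, l j * dist z (y j) ^ 2 := by
    calc ∑ j, l j * dist (y i) (y j) ^ 2
        = ∑ j, (l j * dist z (y i) ^ 2 + l j * dist z (y j) ^ 2
            - 2 * (l j * inner ℝ (z - y i) (z - y j))) := by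
          refine Finset.sum_congr rfl fun j _ ↦ ?_
          rw [dist_comm (y i), dist_eq_norm (y j), ← sub_sub_sub_cancel_left _ _ z,
            norm_sub_sq_real, ← dist_eq_norm, ← dist_eq_norm]
          ring
      _ = dist z (y i) ^ 2 + ∑ j, l j * dist z (y j) ^ 2 := by
          rw [Finset.sum_sub_distrib, Finset.sum_add_distrib, ← Finset.sum_mul, hl,
            ← Finset.mul_sum, hinner]
          ring
  simp_rw [mul_assoc, ← Finset.mul_sum, hrow, mul_add, Finset.sum_add_distrib, ← Finset.sum_mul, hl]
  ring

theorem exists_isSaddlePointOn_sum_mul_dist_sq_sub {ι E : Type*} [Fintype ι] [Nonempty ι]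
    [SeminormedAddCommGroup E] [NormedSpace ℝ E] (y : ι → E) (d : ι → ℝ) :
    ∃ a ∈ convexHull ℝ (range y), ∃ b ∈ stdSimplex ℝ ι, IsSaddlePointOn (convexHull ℝ (range y))
      (stdSimplex ℝ ι) (fun z l ↦ ∑ i, l i * (dist z (y i) ^ 2 - d i)) a b := by
  have hconv (l : ι → ℝ) (hl : l ∈ stdSimplex ℝ ι) : ConvexOn ℝ (convexHull ℝ (range y))
      fun z ↦ ∑ i, l i * (dist z (y i) ^ 2 - d i) := by
    have hterm (i : ι) : ConvexOn ℝ (convexHull ℝ (range y))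
        fun z ↦ l i * (dist z (y i) ^ 2 - d i) :=
      (((convexOn_dist (y i) (convex_convexHull ℝ _)).pow (fun _ _ ↦ dist_nonneg) 2).sub
        (concaveOn_const (d i) (convex_convexHull ℝ _))).smul (hl.1 i)
    simpa only [Finset.sum_fn] using Finset.sum_induction
      (fun i z ↦ l i * (dist z (y i) ^ 2 - d i)) (ConvexOn ℝ (convexHull ℝ (range y)))
      (fun _ _ ↦ ConvexOn.add) (convexOn_const 0 (convex_convexHull ℝ _)) fun i _ ↦ hterm i
  refine Sion.exists_isSaddlePointOn (range_nonempty y).convexHull (convex_convexHull ℝ _)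
    ((finite_range y).isCompact_convexHull ℝ) (fun l _ ↦ ?_) (fun l hl ↦ (hconv l hl).quasiconvexOn)
    (convex_stdSimplex ℝ ι) (isPathConnected_stdSimplex ι).nonempty (isCompact_stdSimplex ℝ ι)
    (fun z _ ↦ ?_) fun z _ ↦ ?_
  · exact (Continuous.lowerSemicontinuous (by fun_prop)).lowerSemicontinuousOn _
  · exact (Continuous.upperSemicontinuous (by fun_prop)).upperSemicontinuousOn _
  · refine ConcaveOn.quasiconcaveOn ⟨convex_stdSimplex ℝ ι, fun l _ m _ p q _ _ _ ↦ le_of_eq ?_⟩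
    simp only [Pi.add_apply, Pi.smul_apply, smul_eq_mul, add_mul, Finset.sum_add_distrib,
      Finset.mul_sum, mul_assoc]

theorem exists_dist_sq_le_of_dist_sq_le_add {ι E : Type*} [Finite ι] [SeminormedAddCommGroup E]
    [InnerProductSpace ℝ E] {y : ι → E} {d : ι → ℝ}
    (hy : ∀ i j, dist (y i) (y j) ^ 2 ≤ d i + d j) : ∃ z, ∀ i, dist z (y i) ^ 2 ≤ d i := by
  classical
  cases nonempty_fintype ι
  rcases isEmpty_or_nonempty ι with _ | _
  · exact ⟨0, isEmptyElim⟩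
  obtain ⟨a, -, l, ⟨hl0, hl1⟩, hsaddle⟩ := exists_isSaddlePointOn_sum_mul_dist_sq_sub y d
  refine ⟨a, fun i ↦ sub_nonpos.1 ?_⟩
  calc dist a (y i) ^ 2 - d i
      ≤ ∑ j, l j * (dist (∑ k, l k • y k) (y j) ^ 2 - d j) := by
        simpa [Pi.single_apply] using hsaddle (∑ k, l k • y k)
          ((convex_convexHull ℝ _).sum_mem (fun k _ ↦ hl0 k) hl1 fun k _ ↦
            subset_convexHull ℝ _ (mem_range_self k)) _ (single_mem_stdSimplex ℝ i)
    _ = (∑ j, ∑ k, l j * l k * dist (y j) (y k) ^ 2) / 2 - ∑ j, l j * d j := by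
        rw [← sum_mul_dist_sq_centerMass y hl1, ← Finset.sum_sub_distrib]
        simp only [mul_sub]
    _ ≤ (∑ j, ∑ k, l j * l k * (d j + d k)) / 2 - ∑ j, l j * d j := by
        gcongr with j _ k _
        · exact mul_nonneg (hl0 j) (hl0 k)
        · exact hy j k
    _ = 0 := by
        simp_rw [show ∀ j k, l j * l k * (d j + d k) = l j * d j * l k + l j * (l k * d k) from
          fun j k ↦ by ring, Finset.sum_add_distrib, ← Finset.mul_sum, ← Finset.sum_mul, hl1]
        ring

variable {X E : Type*} [PseudoMetricSpace X] [SeminormedAddCommGroup E] [InnerProductSpace ℝ E]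
  {c : ℝ}

theorem exists_eqOn_dist_sq_le_insert (hc : 0 ≤ c) {g : X → E} {s : Set X} (hs : s.Finite)
    (hg : ∀ x ∈ s, ∀ y ∈ s, dist (g x) (g y) ^ 2 ≤ c * dist x y) (a : X) :
    ∃ g' : X → E, EqOn g' g s ∧
      ∀ x ∈ insert a s, ∀ y ∈ insert a s, dist (g' x) (g' y) ^ 2 ≤ c * dist x y := by
  classical
  by_cases ha : a ∈ s
  · exact ⟨g, fun _ _ ↦ rfl, by rwa [insert_eq_of_mem ha]⟩
  have := hs.to_subtype
  obtain ⟨z, hz⟩ := exists_dist_sq_le_of_dist_sq_le_add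
    (y := fun x : s ↦ g x) (d := fun x : s ↦ c * dist a x) fun x y ↦ by
      calc dist (g x) (g y) ^ 2 ≤ c * dist (x : X) y := hg x x.2 y y.2
        _ ≤ c * dist a x + c * dist a y := by
          rw [← mul_add]
          gcongr
          exact dist_triangle_left _ _ _
  have heq : EqOn (Function.update g a z) g s := fun x hx ↦
    Function.update_of_ne (ne_of_mem_of_not_mem hx ha) _ _
  refine ⟨Function.update g a z, heq, ?_⟩
  rintro x (rfl | hx) y (rfl | hy)
  · simp
  · simpa [heq hy] using hz ⟨y, hy⟩
  · simpa [heq hx, dist_comm] using hz ⟨x, hx⟩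
  · simpa [heq hx, heq hy] using hg x hx y hy

theorem exists_eqOn_dist_sq_le_union (hc : 0 ≤ c) {g : X → E} {s t : Set X} (hs : s.Finite)
    (hg : ∀ x ∈ s, ∀ y ∈ s, dist (g x) (g y) ^ 2 ≤ c * dist x y) (ht : t.Finite) :
    ∃ g' : X → E, EqOn g' g s ∧
      ∀ x ∈ s ∪ t, ∀ y ∈ s ∪ t, dist (g' x) (g' y) ^ 2 ≤ c * dist x y := by
  induction t, ht using Set.Finite.induction_on with
  | empty => exact ⟨g, fun _ _ ↦ rfl, by simpa using hg⟩
  | @insert a t _ ht ih =>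
    obtain ⟨g₁, heq₁, hg₁⟩ := ih
    obtain ⟨g₂, heq₂, hg₂⟩ := exists_eqOn_dist_sq_le_insert hc (hs.union ht) hg₁ a
    exact ⟨g₂, (heq₂.mono subset_union_left).trans heq₁, by rwa [union_insert]⟩

theorem exists_isSeparated_isCover {s : Set X} (hs : s.Finite) (r : ℝ≥0) :
    ∃ t ⊆ s, IsSeparated r t ∧ IsCover r s t :=
  ⟨maximalSeparatedSet r s, maximalSeparatedSet_subset, isSeparated_maximalSeparatedSet,
    isCover_maximalSeparatedSet
      (ne_top_of_le_ne_top (encard_ne_top_iff.2 hs) (packingNumber_le_encard_self s))⟩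

theorem exists_dist_sq_le_and_le_dist_of_finite (hc : 0 ≤ c) {r : ℝ≥0} {D M : ℝ} {g : X → E}
    (hupper : ∀ x y, r ≤ dist x y → dist (g x) (g y) ^ 2 ≤ c * dist x y)
    (hlower : ∀ x y, D ≤ dist x y → M ≤ dist (g x) (g y)) {s : Set X} (hs : s.Finite) :
    ∃ g' : X → E, ∀ x ∈ s, ∀ y ∈ s, dist (g' x) (g' y) ^ 2 ≤ c * dist x y ∧
      (D + 2 * r ≤ dist x y → M - 2 * √(c * r) ≤ dist (g' x) (g' y)) := by
  obtain ⟨t, hts, hsep, hcover⟩ := exists_isSeparated_isCover hs r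
  have hg : ∀ x ∈ t, ∀ y ∈ t, dist (g x) (g y) ^ 2 ≤ c * dist x y := by
    intro x hx y hy
    rcases eq_or_ne x y with rfl | hxy
    · simp
    · have hr : r < edist x y := hsep hx hy hxy
      rw [edist_nndist, ENNReal.coe_lt_coe] at hr
      exact hupper x y (NNReal.coe_le_coe.2 hr.le)
  obtain ⟨g', heq, hg'⟩ := exists_eqOn_dist_sq_le_union hc (hs.subset hts) hg hs
  rw [union_eq_self_of_subset_left hts] at hg'
  have hnear : ∀ x ∈ s, ∃ a ∈ t, dist x a ≤ r ∧ dist (g' x) (g' a) ≤ √(c * r) := by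
    intro x hx
    obtain ⟨a, ha, hxa⟩ := mem_iUnion₂.1 (hcover.subset_iUnion_closedBall hx)
    refine ⟨a, ha, hxa, Real.le_sqrt_of_sq_le ((hg' x hx a (hts ha)).trans ?_)⟩
    gcongr
    exact hxa
  refine ⟨g', fun x hx y hy ↦ ⟨hg' x hx y hy, fun hxy ↦ ?_⟩⟩
  obtain ⟨a, ha, hxa, hgxa⟩ := hnear x hx
  obtain ⟨b, hb, hyb, hgyb⟩ := hnear y hy
  have hab : D ≤ dist a b := by
    linarith [dist_triangle4 x a b y, dist_comm y b]
  have hM : M ≤ dist (g' a) (g' b) := by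
    rw [heq ha, heq hb]
    exact hlower a b hab
  linarith [dist_triangle4 (g' a) (g' x) (g' y) (g' b), dist_comm (g' a) (g' x)]

end WellsWilliams

section MarkovKakutani

variable {E : Type*} [AddCommGroup E] [Module ℝ E] [TopologicalSpace E] [IsTopologicalAddGroup E]
  [ContinuousSMul ℝ E] {S : Set E}

theorem birkhoffAverage_mem_of_convex {F : Type*} [AddCommGroup F] [Module ℝ F] {S : Set F}
    (hS : Convex ℝ S) {T : F → F} (hT : MapsTo T S S) {x : F} (hx : x ∈ S) {n : ℕ} (hn : n ≠ 0) :
    birkhoffAverage ℝ T id n x ∈ S := by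
  rw [birkhoffAverage, birkhoffSum, Finset.smul_sum]
  exact hS.sum_mem (fun _ _ ↦ by positivity) (by simp [hn]) fun k _ ↦ hT.iterate k hx

theorem tendsto_apply_birkhoffAverage_sub (hS : IsCompact S) (T : E →L[ℝ] E) (hT : MapsTo T S S)
    {x : E} (hx : x ∈ S) :
    Tendsto (fun n ↦ T (birkhoffAverage ℝ T id n x) - birkhoffAverage ℝ T id n x) atTop (𝓝 0) := by
  have hdiff (n : ℕ) : T (birkhoffAverage ℝ T id n x) - birkhoffAverage ℝ T id n x =
      (n : ℝ)⁻¹ • (T^[n] x - x) := by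
    have hshift : birkhoffAverage ℝ T (T ∘ id) n x = birkhoffAverage ℝ T id n (T x) := by
      simp [birkhoffAverage, birkhoffSum, ← Function.iterate_succ_apply,
        Function.iterate_succ_apply']
    rw [map_birkhoffAverage ℝ ℝ, hshift, birkhoffAverage_apply_sub_birkhoffAverage, id, id]
  simp only [hdiff]
  have hbounded := hS.isVonNBounded ℝ
  exact (hbounded.sub hbounded).smul_tendsto_zero
    (.of_forall fun n ↦ sub_mem_sub (hT.iterate n hx) hx) tendsto_inv_atTop_nhds_zero_nat

variable [T2Space E]

theorem exists_apply_eq_of_isCompact_of_convex (hne : S.Nonempty) (hS : IsCompact S)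
    (hconv : Convex ℝ S) (T : E →L[ℝ] E) (hT : MapsTo T S S) : ∃ x ∈ S, T x = x := by
  obtain ⟨x₀, hx₀⟩ := hne
  let avg (n : ℕ) : E := birkhoffAverage ℝ T id n x₀
  have havg : ∀ᶠ n in hyperfilter ℕ, avg n ∈ S :=
    ((eventually_ne_atTop 0).filter_mono Nat.hyperfilter_le_atTop).mono fun _ hn ↦
      birkhoffAverage_mem_of_convex hconv hT hx₀ hn
  obtain ⟨x, hx, hlim⟩ :=
    hS.ultrafilter_le_nhds ((hyperfilter ℕ).map avg) (le_principal_iff.2 havg)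
  replace hlim : Tendsto avg (hyperfilter ℕ) (𝓝 x) := hlim
  refine ⟨x, hx, sub_eq_zero.1 (tendsto_nhds_unique
    (((T.continuous.tendsto x).comp hlim).sub hlim) ?_)⟩
  exact (tendsto_apply_birkhoffAverage_sub hS T hT hx₀).mono_left Nat.hyperfilter_le_atTop

theorem exists_forall_apply_eq_of_commute {ι : Type*} {T : ι → E →L[ℝ] E}
    (hcomm : ∀ i j x, T i (T j x) = T j (T i x)) (hne : S.Nonempty) (hS : IsCompact S)
    (hconv : Convex ℝ S) (hT : ∀ i, MapsTo (T i) S S) : ∃ x ∈ S, ∀ i, T i x = x := by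
  classical
  have hclosed (i : ι) : IsClosed {x | T i x = x} := isClosed_eq (T i).continuous continuous_id
  have hfix (i : ι) : Convex ℝ {x | T i x = x} := fun x hx y hy p q _ _ _ ↦ by
    simp_all only [mem_ofPred_eq, map_add, map_smul]
  suffices hfinite : ∀ t : Finset ι, (S ∩ ⋂ i ∈ t, {x | T i x = x}).Nonempty by
    obtain ⟨x, hx, hxT⟩ := hS.inter_iInter_nonempty _ hclosed hfinite
    exact ⟨x, hx, fun i ↦ mem_iInter.1 hxT i⟩
  intro t
  induction t using Finset.induction_on with
  | empty => simpa using hne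
  | insert j t _ ih =>
    obtain ⟨x, ⟨hxS, hxt⟩, hxj⟩ := exists_apply_eq_of_isCompact_of_convex ih
      (hS.inter_right (isClosed_biInter fun i _ ↦ hclosed i))
      (hconv.inter (convex_iInter₂ fun i _ ↦ hfix i)) (T j)
      fun x hx ↦ ⟨hT j hx.1, mem_iInter₂.2 fun i hi ↦ by
        have hxi : T i x = x := mem_iInter₂.1 hx.2 i hi
        rw [mem_ofPred_eq, hcomm, hxi]⟩
    refine ⟨x, hxS, ?_⟩
    rw [Finset.set_biInter_insert]
    exact ⟨hxj, hxt⟩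

end MarkovKakutani

section TranslationInvariance

theorem exists_isNegType_mem_Icc_of_finset {Y : Type*} {L U : Y → Y → ℝ}
    (h : ∀ s : Finset Y, ∃ K, IsNegType K ∧ ∀ x ∈ s, ∀ y ∈ s, K x y ∈ Icc (L x y) (U x y)) :
    ∃ K, IsNegType K ∧ K ∈ Icc L U := by
  classical
  choose K hK hmem using h
  let 𝒰 : Ultrafilter (Finset Y) := .of atTop
  have hev (x y : Y) : ∀ᶠ s in 𝒰, K s x y ∈ Icc (L x y) (U x y) :=
    ((eventually_ge_atTop {x, y}).filter_mono (Ultrafilter.of_le atTop)).mono fun s hs ↦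
      hmem s x (hs (by simp)) y (hs (by simp))
  choose K' hK' hlim using fun x y ↦ isCompact_Icc.ultrafilter_le_nhds (𝒰.map (K · x y))
    (le_principal_iff.2 (hev x y))
  exact ⟨K', IsNegType.isClosed_setOf.mem_of_tendsto
    (tendsto_pi_nhds.2 fun x ↦ tendsto_pi_nhds.2 (hlim x)) (.of_forall hK),
    fun x y ↦ (hK' x y).1, fun x y ↦ (hK' x y).2⟩

theorem IsNegType.exists_translationInvariant {G : Type*} [AddCommGroup G] {L U K : G → G → ℝ}
    (hL : ∀ a x y, L (a + x) (a + y) = L x y) (hU : ∀ a x y, U (a + x) (a + y) = U x y)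
    (hK : IsNegType K) (hLU : K ∈ Icc L U) :
    ∃ K', IsNegType K' ∧ K' ∈ Icc L U ∧ ∀ a x y, K' (a + x) (a + y) = K' x y := by
  let translate (a : G) : (G → G → ℝ) →L[ℝ] G → G → ℝ :=
    .pi fun x ↦ .pi fun y ↦ .proj (a + y) ∘L .proj (a + x)
  have hmaps (a : G) : MapsTo (translate a) ({K | IsNegType K} ∩ Icc L U)
      ({K | IsNegType K} ∩ Icc L U) := fun M ⟨hM, hLM, hMU⟩ ↦
    ⟨IsNegType.comp hM (a + ·), fun x y ↦ (hL a x y).symm.trans_le (hLM (a + x) (a + y)),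
      fun x y ↦ (hMU (a + x) (a + y)).trans_eq (hU a x y)⟩
  obtain ⟨K', ⟨hK', hLU'⟩, hinv⟩ := exists_forall_apply_eq_of_commute
    (S := {K | IsNegType K} ∩ Icc L U)
    (fun a b M ↦ by ext x y; simp [translate, add_left_comm]) ⟨K, hK, hLU⟩
    (isCompact_Icc.inter_left isClosed_setOf) (convex_setOf.inter (convex_Icc L U)) hmaps
  exact ⟨K', hK', hLU', fun a x y ↦ congr_fun₂ (hinv a) x y⟩

theorem exists_dist_translationInvariant_of_finset {G : Type u} [SeminormedAddCommGroup G]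
    [Small.{w} G] {E : Type*} [SeminormedAddCommGroup E] [InnerProductSpace ℝ E] {c C R : ℝ}
    (hC : 0 ≤ C) (h : ∀ s : Finset G, ∃ g : G → E, ∀ x ∈ s, ∀ y ∈ s,
      dist (g x) (g y) ^ 2 ≤ c * dist x y ∧ (R ≤ dist x y → C ≤ dist (g x) (g y))) :
    ∃ (H : Type w) (_ : NormedAddCommGroup H) (_ : InnerProductSpace ℝ H) (_ : CompleteSpace H)
      (g : G → H), (∀ a x y, dist (g (a + x)) (g (a + y)) = dist (g x) (g y)) ∧
      ∀ x y, dist (g x) (g y) ^ 2 ≤ c * dist x y ∧ (R ≤ dist x y → C ≤ dist (g x) (g y)) := by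
  let L (x y : G) : ℝ := if R ≤ dist x y then C ^ 2 else 0
  obtain ⟨K, hK, hKLU⟩ := exists_isNegType_mem_Icc_of_finset
    (L := L) (U := fun x y ↦ c * dist x y) fun s ↦ by
      obtain ⟨g, hg⟩ := h s
      refine ⟨_, .dist_sq g, fun x hx y hy ↦ ⟨?_, (hg x hx y hy).1⟩⟩
      dsimp only [L]
      split_ifs with hR
      · exact pow_le_pow_left₀ hC ((hg x hx y hy).2 hR) 2
      · positivity
  obtain ⟨K', hK', hKLU', hinv⟩ := hK.exists_translationInvariant (by simp [L]) (by simp) hKLU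
  obtain ⟨H, _, _, _, g, hg⟩ := IsNegType.exists_dist_sq_eq.{u, w} hK'
  refine ⟨H, inferInstance, inferInstance, inferInstance, g, fun a x y ↦ ?_, fun x y ↦ ⟨?_, ?_⟩⟩
  · rw [← sq_eq_sq₀ dist_nonneg dist_nonneg, hg, hg, hinv]
  · exact (hg x y).trans_le (hKLU'.2 x y)
  · intro hR
    refine (sq_le_sq₀ hC dist_nonneg).1 ?_
    simpa [hg, L, hR] using hKLU'.1 x y

end TranslationInvariance

section Chaining

theorem dist_le_natCast_mul_of_dist_le {X Y : Type*} [SeminormedAddCommGroup X] [NormedSpace ℝ X]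
    [PseudoMetricSpace Y] {f : X → Y} {δ τ : ℝ} (hf : ∀ x y, dist x y ≤ δ → dist (f x) (f y) ≤ τ)
    {x y : X} {n : ℕ} (hn : n ≠ 0) (hxy : dist x y ≤ n * δ) : dist (f x) (f y) ≤ n * τ := by
  let p (k : ℕ) : X := AffineMap.lineMap x y (k / n : ℝ)
  have hstep (k : ℕ) : dist (f (p k)) (f (p (k + 1))) ≤ τ := by
    refine hf _ _ ?_
    have hdist : dist (k / n : ℝ) ((k + 1 : ℕ) / n) = (n : ℝ)⁻¹ := by
      rw [dist_comm, Real.dist_eq, ← sub_div]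
      simp
    rw [dist_lineMap_lineMap, hdist]
    exact (inv_mul_le_iff₀ (by positivity)).2 hxy
  calc dist (f x) (f y) = dist (f (p 0)) (f (p n)) := by simp [p, hn]
    _ ≤ ∑ _ ∈ Finset.range n, τ :=
        dist_le_range_sum_of_dist_le (f := f ∘ p) n fun _ ↦ hstep _
    _ = n * τ := by simp

theorem dist_le_two_mul_mul_dist {X Y : Type*} [SeminormedAddCommGroup X] [NormedSpace ℝ X]
    [PseudoMetricSpace Y] {f : X → Y} {τ : ℝ} (hf : ∀ x y, dist x y ≤ 1 → dist (f x) (f y) ≤ τ)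
    {x y : X} (hxy : 1 ≤ dist x y) : dist (f x) (f y) ≤ 2 * τ * dist x y := by
  have hτ : 0 ≤ τ := dist_nonneg.trans (hf x x (by simp))
  calc dist (f x) (f y) ≤ ⌈dist x y⌉₊ * τ :=
        dist_le_natCast_mul_of_dist_le hf (by positivity) (by simpa using Nat.le_ceil (dist x y))
    _ ≤ 2 * dist x y * τ := by
        gcongr
        linarith [Nat.ceil_lt_add_one (dist_nonneg (x := x) (y := y))]
    _ = 2 * τ * dist x y := by ring

variable {G Y : Type*} [SeminormedAddCommGroup G] [PseudoMetricSpace Y] {h : G → Y}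

theorem dist_add_nsmul_le_of_translationInvariant
    (hinv : ∀ a x y, dist (h (a + x)) (h (a + y)) = dist (h x) (h y)) (x v : G) (n : ℕ) :
    dist (h x) (h (x + n • v)) ≤ n * dist (h x) (h (x + v)) := by
  have hstep (k : ℕ) : dist (h (x + k • v)) (h (x + (k + 1) • v)) = dist (h x) (h (x + v)) := by
    rw [← hinv (k • v) x (x + v), succ_nsmul, add_left_comm (k • v) x v, add_comm x (k • v)]
  simpa [hstep] using dist_le_range_sum_dist (fun k ↦ h (x + k • v)) n

theorem mul_min_one_le_dist_of_translationInvariant [NormedSpace ℝ G]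
    (hinv : ∀ a x y, dist (h (a + x)) (h (a + y)) = dist (h x) (h y)) {C R : ℝ} (hC : 0 ≤ C)
    (hR : 0 < R) (hfar : ∀ x y, R ≤ dist x y → C ≤ dist (h x) (h y)) (x y : G) :
    C * min 1 (dist x y / (2 * R)) ≤ dist (h x) (h y) := by
  rcases le_or_gt R (dist x y) with hRxy | hRxy
  · exact (mul_le_of_le_one_right hC (min_le_left _ _)).trans (hfar x y hRxy)
  rcases (dist_nonneg (x := x) (y := y)).eq_or_lt' with hzero | hpos
  · simp [hzero]
  set t := dist x y
  set n := ⌈R / t⌉₊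
  have hn : n * t ≤ 2 * R := by
    have := Nat.ceil_lt_add_one (div_nonneg hR.le hpos.le)
    calc n * t ≤ (R / t + 1) * t := by gcongr
      _ = R + t := by field_simp
      _ ≤ 2 * R := by linarith
  have hfar_n : R ≤ dist x (x + n • (y - x)) := by
    rw [dist_self_add_right, ← Nat.cast_smul_eq_nsmul ℝ, norm_smul, Real.norm_natCast,
      ← dist_eq_norm', ← div_le_iff₀ hpos]
    exact Nat.le_ceil _
  have hchain : C ≤ n * dist (h x) (h y) := by
    simpa using (hfar _ _ hfar_n).trans (dist_add_nsmul_le_of_translationInvariant hinv x (y - x) n)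
  calc C * min 1 (t / (2 * R)) ≤ n * dist (h x) (h y) * (t / (2 * R)) := by
        gcongr
        exact min_le_right _ _
    _ = dist (h x) (h y) * (n * t / (2 * R)) := by ring
    _ ≤ dist (h x) (h y) :=
        mul_le_of_le_one_right dist_nonneg (div_le_one_of_le₀ hn (by positivity))

end Chaining

section ThresholdMap

theorem stmt_16_general {X : Type u} [SeminormedAddCommGroup X] [NormedSpace ℝ X] [Small.{w} X]
    {H : Type*} [SeminormedAddCommGroup H] [InnerProductSpace ℝ H] {D τ₁ τ₂ : ℝ} (hD : 0 < D)
    (hτ : 8 * τ₁ ≤ τ₂) {f : X → H} (hnear : ∀ x y, dist x y ≤ 1 → dist (f x) (f y) ≤ τ₁)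
    (hfar : ∀ x y, D ≤ dist x y → τ₂ ≤ dist (f x) (f y)) :
    ∃ (H' : Type w) (_ : NormedAddCommGroup H') (_ : InnerProductSpace ℝ H')
      (_ : CompleteSpace H') (h : X → H'), ∀ x y,
        (√τ₂ - √(8 * τ₁)) * min 1 (dist x y / (2 * D + 4)) ≤ dist (h x) (h y) ∧
        dist (h x) (h y) ≤ √(2 * τ₁ * dist x y) := by
  have hτ₁ : 0 ≤ τ₁ := dist_nonneg.trans (hnear 0 0 (by simp))
  have hgap : 0 ≤ √τ₂ - √(8 * τ₁) := sub_nonneg.2 (Real.sqrt_le_sqrt hτ)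
  obtain ⟨E, _, _, _, g, hg⟩ := exists_dist_sq_eq_dist.{u, u} f
  have hgfin (s : Finset X) : ∃ g' : X → E, ∀ x ∈ s, ∀ y ∈ s,
      dist (g' x) (g' y) ^ 2 ≤ 2 * τ₁ * dist x y ∧
      (D + 2 ≤ dist x y → √τ₂ - √(8 * τ₁) ≤ dist (g' x) (g' y)) := by
    have hsqrt : √(8 * τ₁) = 2 * √(2 * τ₁) := by
      rw [show 8 * τ₁ = 2 ^ 2 * (2 * τ₁) by ring, Real.sqrt_mul (by positivity),
        Real.sqrt_sq zero_le_two]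
    simpa [hsqrt] using exists_dist_sq_le_and_le_dist_of_finite (c := 2 * τ₁) (by positivity)
      (r := 1) (fun x y hxy ↦ (hg x y).trans_le (dist_le_two_mul_mul_dist hnear hxy))
      (fun x y hxy ↦ Real.sqrt_le_iff.2 ⟨dist_nonneg, (hfar x y hxy).trans_eq (hg x y).symm⟩)
      s.finite_toSet
  obtain ⟨H', _, _, _, h, hinv, hh⟩ := exists_dist_translationInvariant_of_finset.{u, w} hgap hgfin
  refine ⟨H', inferInstance, inferInstance, inferInstance, h, fun x y ↦
    ⟨?_, Real.le_sqrt_of_sq_le (hh x y).1⟩⟩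
  rw [show 2 * D + 4 = 2 * (D + 2) by ring]
  exact mul_min_one_le_dist_of_translationInvariant hinv hgap (by positivity) (fun x y ↦ (hh x y).2)
    x y

end ThresholdMap

theorem stmt_16 {X : Type*} [NormedAddCommGroup X] [NormedSpace ℝ X]
    [FiniteDimensional ℝ X]
    (D τ₁ τ₂ : ℝ) (hD : 1 < D) (hτ0 : 0 < τ₁) (hτ1 : τ₁ < τ₂)
    (hτ8 : 8 * τ₁ < τ₂)
    (hthr : ∃ (H : Type) (_ : NormedAddCommGroup H) (_ : InnerProductSpace ℝ H)
      (_ : CompleteSpace H) (f : X → H),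
      (∀ x₁ x₂ : X, ‖x₁ - x₂‖ ≤ 1 → ‖f x₁ - f x₂‖ ≤ τ₁) ∧
      (∀ x₁ x₂ : X, D ≤ ‖x₁ - x₂‖ → τ₂ ≤ ‖f x₁ - f x₂‖)) :
    ∃ (H' : Type) (_ : NormedAddCommGroup H') (_ : InnerProductSpace ℝ H')
      (_ : CompleteSpace H') (h : X → H'),
      ∀ x₁ x₂ : X,
        (Real.sqrt τ₂ - Real.sqrt (8 * τ₁)) *
            min 1 (‖x₁ - x₂‖ / (2 * D + 4)) ≤ ‖h x₁ - h x₂‖ ∧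
        ‖h x₁ - h x₂‖ ≤ Real.sqrt (2 * τ₁ * ‖x₁ - x₂‖) := by
  obtain ⟨H, _, _, _, f, hnear, hfar⟩ := hthr
  have : Small.{0} X := small_of_injective (Module.finBasis ℝ X).equivFun.injective
  simp only [← dist_eq_norm] at hnear hfar ⊢
  exact stmt_16_general (by linarith) hτ8.le hnear hfar
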